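/- Universal property of TS^ℓ(A): for every unital associative k-algebra B and every Lie algebra homomorphism ρ : A^- → B^- satisfying the (ℓ+1)-st symmetric identity and ρ(1_A) = ℓ·1_B, there exists a unique unital algebra homomorphism φ : TS^ℓ(A) → B with φ ∘ sym_ℓ = ρ. -/

import Mathlib

open PiTensorProduct
open scoped TensorProduct

/-- The symmetrization map `sym_ℓ(a) = Σ_{i=1}^ℓ 1^{⊗(i-1)} ⊗ a ⊗ 1^{⊗(ℓ-i)}`. -/
noncomputable def symTen (k A : Type*) [Field k] [Ring A] [Algebra k A] (ℓ : ℕ)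
    (a : A) : ⨂[k] _ : Fin ℓ, A :=
  ∑ i : Fin ℓ, tprod k (Function.update (fun _ : Fin ℓ => (1 : A)) i a)

/-- The number of cycles of length `j` (including fixed points) of a permutation of `Fin m`. -/
def cycleCount {m : ℕ} (σ : Equiv.Perm (Fin m)) (j : ℕ) : ℕ :=
  (σ.cycleType + Multiset.replicate (m - σ.cycleType.sum) 1).count j

/-- The left-hand side of the `m`-th symmetric identity for a linear map `ρ : A → B`,
`Σ_p sgn(C(p))·|C(p)|·ρ(a)^{p_1}⋯ρ(a^m)^{p_m}`, written as a sum over all of `S_m`. -/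
noncomputable def symIdentLHS {A B : Type*} [Ring A] [Ring B] (ρ : A → B) (m : ℕ) (a : A) : B :=
  ∑ σ : Equiv.Perm (Fin m), (Equiv.Perm.sign σ : ℤ) •
    ((List.range m).map (fun j => ρ (a ^ (j + 1)) ^ cycleCount σ (j + 1))).prod

section TS
variable (k A : Type*) [Field k] [Ring A] [Algebra k A] (ℓ : ℕ)

lemma reindex_one (σ : Equiv.Perm (Fin ℓ)) :
    PiTensorProduct.reindex k (fun _ : Fin ℓ => A) σ 1 = 1 := by
  rw [PiTensorProduct.one_def, PiTensorProduct.reindex_tprod]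
  rfl

lemma reindex_mul (σ : Equiv.Perm (Fin ℓ)) (x y : ⨂[k] _ : Fin ℓ, A) :
    PiTensorProduct.reindex k (fun _ : Fin ℓ => A) σ (x * y) =
      PiTensorProduct.reindex k (fun _ : Fin ℓ => A) σ x *
        PiTensorProduct.reindex k (fun _ : Fin ℓ => A) σ y := by
  have h : ∀ f g : Fin ℓ → A,
      PiTensorProduct.reindex k (fun _ : Fin ℓ => A) σ (tprod k f * tprod k g) =
        PiTensorProduct.reindex k (fun _ : Fin ℓ => A) σ (tprod k f) *
          PiTensorProduct.reindex k (fun _ : Fin ℓ => A) σ (tprod k g) := by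
    intro f g
    rw [PiTensorProduct.tprod_mul_tprod, PiTensorProduct.reindex_tprod,
      PiTensorProduct.reindex_tprod, PiTensorProduct.reindex_tprod,
      PiTensorProduct.tprod_mul_tprod]
    rfl
  induction x using PiTensorProduct.induction_on with
  | smul_tprod r f =>
    induction y using PiTensorProduct.induction_on with
    | smul_tprod s g =>
      rw [smul_mul_smul_comm, map_smul, map_smul, map_smul, h, smul_mul_smul_comm]
    | add u v hu hv =>
      rw [mul_add, map_add, map_add, hu, hv, mul_add]
  | add u v hu hv =>
    rw [add_mul, map_add, map_add, hu, hv, add_mul]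

/-- The algebra `TS^ℓ(A)` of symmetric tensors, as a subalgebra of `A^{⊗ℓ}`. -/
noncomputable def tsSubalgebra : Subalgebra k (⨂[k] _ : Fin ℓ, A) where
  carrier := {x | ∀ σ : Equiv.Perm (Fin ℓ),
    PiTensorProduct.reindex k (fun _ : Fin ℓ => A) σ x = x}
  mul_mem' := fun hx hy σ => by
    rw [reindex_mul, hx σ, hy σ]
  one_mem' := fun σ => reindex_one k A ℓ σ
  add_mem' := fun hx hy σ => by rw [map_add, hx σ, hy σ]
  zero_mem' := fun σ => map_zero _
  algebraMap_mem' := fun r σ => by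
    rw [Algebra.algebraMap_eq_smul_one, map_smul, reindex_one]

end TS


/-- Multilinear polarization: a symmetric multilinear map vanishing on the diagonal is zero. -/
theorem polar_zero {k A B : Type*} [Field k] [CharZero k] [Ring A] [Algebra k A]
    [Ring B] [Algebra k B] {n : ℕ} (f : MultilinearMap k (fun _ : Fin n => A) B)
    (hs : ∀ (σ : Equiv.Perm (Fin n)) (a : Fin n → A), f (fun i => a (σ i)) = f a)
    (hd : ∀ a : A, f (fun _ => a) = 0) (a : Fin n → A) : f a = 0 := by
  classical
  let c : Fin 2 → k := ![-1, 1]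
  let v : Fin 2 → k := ![0, 1]
  have h1 : ∀ ε : Fin n → Fin 2,
      ∑ g : Fin n → Fin n, (∏ j, v (ε (g j))) • f (fun j => a (g j)) = 0 := by
    intro ε
    have h := hd (∑ i, v (ε i) • a i)
    rw [f.map_sum (fun (_ : Fin n) (i : Fin n) => v (ε i) • a i)] at h
    rw [← h]
    refine Finset.sum_congr rfl fun g _ => ?_
    rw [← f.map_smul_univ]
  have h2 : ∑ ε : Fin n → Fin 2, (∏ i, c (ε i)) •
      ∑ g : Fin n → Fin n, (∏ j, v (ε (g j))) • f (fun j => a (g j)) = 0 := by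
    refine Finset.sum_eq_zero fun ε _ => ?_
    rw [h1, smul_zero]
  have h3 : ∀ g : Fin n → Fin n,
      ∑ ε : Fin n → Fin 2, (∏ i, c (ε i)) * (∏ j, v (ε (g j))) =
        if Function.Surjective g then 1 else 0 := by
    intro g
    have e1 : ∀ ε : Fin n → Fin 2, (∏ i, c (ε i)) * (∏ j, v (ε (g j))) =
        ∏ i, (c (ε i) * v (ε i) ^ (Finset.univ.filter fun j => g j = i).card) := by
      intro ε
      rw [Finset.prod_mul_distrib]
      congr 1
      rw [← Finset.prod_fiberwise (s := Finset.univ) (g := g)]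
      refine Finset.prod_congr rfl fun i _ => ?_
      rw [← Finset.prod_const]
      refine Finset.prod_congr rfl fun j hj => ?_
      rw [(Finset.mem_filter.1 hj).2]
    rw [Finset.sum_congr rfl fun ε _ => e1 ε]
    have e2 := Finset.prod_univ_sum (R := k) (fun _ : Fin n => (Finset.univ : Finset (Fin 2)))
      (fun i x => c x * v x ^ (Finset.univ.filter fun j => g j = i).card)
    rw [Fintype.piFinset_univ] at e2
    rw [← e2]
    split_ifs with hg
    · refine Finset.prod_eq_one fun i _ => ?_
      obtain ⟨j, hj⟩ := hg i
      have : (Finset.univ.filter fun j => g j = i).card ≠ 0 :=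
        Finset.card_ne_zero_of_mem (a := j) (by simp [hj])
      simp [Fin.sum_univ_two, c, v, this]
    · simp only [Function.Surjective, not_forall] at hg
      obtain ⟨i, hi⟩ := hg
      refine Finset.prod_eq_zero (Finset.mem_univ i) ?_
      have : (Finset.univ.filter fun j => g j = i) = ∅ := by
        refine Finset.filter_eq_empty_iff.2 fun j _ hj => hi ⟨j, hj⟩
      simp [Fin.sum_univ_two, c, v, this]
  simp only [Finset.smul_sum, smul_smul] at h2
  rw [Finset.sum_comm] at h2
  simp only [← Finset.sum_smul, h3, ite_smul, one_smul, zero_smul] at h2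
  rw [← Finset.sum_filter] at h2
  have h4 : ∀ g ∈ Finset.univ.filter (fun g : Fin n → Fin n => Function.Surjective g),
      f (fun j => a (g j)) = f a := by
    intro g hg
    have hb : Function.Bijective g :=
      Finite.injective_iff_bijective.1
        (Finite.injective_iff_surjective.2 (Finset.mem_filter.1 hg).2)
    exact hs (Equiv.ofBijective g hb) a
  rw [Finset.sum_congr rfl h4, Finset.sum_const, ← Nat.cast_smul_eq_nsmul k] at h2
  refine (smul_eq_zero.1 h2).resolve_left ?_
  refine Nat.cast_ne_zero.2 ?_
  exact Finset.card_ne_zero_of_mem (a := id) (by simp [Function.surjective_id])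

section EMsec
variable {k A B : Type*} [Field k] [Ring A] [Algebra k A] [Ring B] [Algebra k B]

theorem compLin_upd {n : ℕ} (f : MultilinearMap k (fun _ : Fin n => A) B) (b : A) (j : Fin n)
    (a : Fin n → A) :
    f.compLinearMap (fun i => if i = j then LinearMap.mulLeft k b else LinearMap.id) a =
      f (Function.update a j (b * a j)) := by
  rw [MultilinearMap.compLinearMap_apply]
  congr 1
  funext i
  by_cases h : i = j
  · subst h; simp
  · simp [h]

/-- The recursively defined multilinear maps `E_n`. -/
noncomputable def EM (ρ : A →ₗ[k] B) : (n : ℕ) → MultilinearMap k (fun _ : Fin n => A) B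
  | 0 => MultilinearMap.constOfIsEmpty k _ 1
  | n + 1 => LinearMap.uncurryLeft (M := fun _ : Fin (n + 1) => A)
      { toFun := fun b => (LinearMap.mulLeft k (ρ b)).compMultilinearMap (EM ρ n) -
          ∑ j, (EM ρ n).compLinearMap
            (fun i => if i = j then LinearMap.mulLeft k b else LinearMap.id)
        map_add' := by
          intro x y
          ext a
          simp only [sub_apply, add_apply, sum_apply,
            compLin_upd, LinearMap.compMultilinearMap_apply, LinearMap.mulLeft_apply, map_add,
            add_mul, MultilinearMap.map_update_add, Finset.sum_add_distrib]
          abel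
        map_smul' := by
          intro c x
          ext a
          simp only [sub_apply, smul_apply, sum_apply,
            compLin_upd, LinearMap.compMultilinearMap_apply, LinearMap.mulLeft_apply, map_smul,
            smul_mul_assoc, MultilinearMap.map_update_smul, ← Finset.smul_sum, smul_sub,
            RingHom.id_apply] }

theorem EM_zero (ρ : A →ₗ[k] B) (a : Fin 0 → A) : EM ρ 0 a = 1 := by
  simp [EM]

theorem EM_succ (ρ : A →ₗ[k] B) (n : ℕ) (b : A) (a : Fin n → A) :
    EM ρ (n + 1) (Fin.cons b a : Fin (n + 1) → A) =
      ρ b * EM ρ n a - ∑ j, EM ρ n (Function.update a j (b * a j)) := by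
  simp only [EM, LinearMap.uncurryLeft_apply, Fin.cons_zero, Fin.tail_cons, LinearMap.coe_mk,
    AddHom.coe_mk, sub_apply, sum_apply,
    compLin_upd, LinearMap.compMultilinearMap_apply, LinearMap.mulLeft_apply]
end EMsec

section EMsymm
variable {k A B : Type*} [Field k] [Ring A] [Algebra k A] [Ring B] [Algebra k B]

theorem EM_swap (ρ : A →ₗ[k] B)
    (hbr : ∀ a b : A, ρ (a * b - b * a) = ρ a * ρ b - ρ b * ρ a) (n : ℕ) (b c : A)
    (a : Fin n → A) :
    EM ρ (n + 2) (Fin.cons b (Fin.cons c a : Fin (n + 1) → A) : Fin (n + 2) → A) =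
      EM ρ (n + 2) (Fin.cons c (Fin.cons b a : Fin (n + 1) → A) : Fin (n + 2) → A) := by
  have key : ∀ b c : A,
      EM ρ (n + 2) (Fin.cons b (Fin.cons c a : Fin (n + 1) → A) : Fin (n + 2) → A) =
        ρ b * (ρ c * EM ρ n a) - ρ b * ∑ j, EM ρ n (Function.update a j (c * a j))
        - (ρ (b * c) * EM ρ n a - ∑ j, EM ρ n (Function.update a j (b * c * a j)))
        - (ρ c * ∑ j, EM ρ n (Function.update a j (b * a j)) -
          ∑ j, ∑ i, EM ρ n (Function.update (Function.update a j (b * a j)) i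
            (c * Function.update a j (b * a j) i))) := by
    intro b c
    rw [EM_succ, EM_succ, Fin.sum_univ_succ]
    simp only [Fin.update_cons_zero, Fin.cons_zero, Fin.cons_succ, ← Fin.cons_update, EM_succ,
      Finset.sum_sub_distrib, ← Finset.mul_sum, mul_sub]
    abel
  have hD : ∑ j, ∑ i, EM ρ n (Function.update (Function.update a j (b * a j)) i
            (c * Function.update a j (b * a j) i)) -
          ∑ j, EM ρ n (Function.update a j (c * b * a j)) =
        ∑ j, ∑ i, EM ρ n (Function.update (Function.update a j (c * a j)) i
            (b * Function.update a j (c * a j) i)) -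
          ∑ j, EM ρ n (Function.update a j (b * c * a j)) := by
    have e : ∀ x : A, ∑ j, EM ρ n (Function.update a j (x * a j)) =
        ∑ j, ∑ i, if i = j then EM ρ n (Function.update a j (x * a j)) else 0 := by
      intro x
      simp
    rw [e, e]
    simp only [← Finset.sum_sub_distrib]
    rw [Finset.sum_comm]
    refine Finset.sum_congr rfl fun i _ => Finset.sum_congr rfl fun j _ => ?_
    by_cases h : i = j
    · subst h
      simp [mul_assoc]
    · have h' : j ≠ i := fun h' => h h'.symm
      simp only [h, h', if_false, sub_zero, Function.update_of_ne, ne_eq, not_false_eq_true]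
      rw [Function.update_comm h]
  have hρ : ρ b * (ρ c * EM ρ n a) = ρ c * (ρ b * EM ρ n a) +
      (ρ (b * c) * EM ρ n a - ρ (c * b) * EM ρ n a) := by
    have := hbr b c
    rw [map_sub] at this
    rw [← sub_mul, this, sub_mul, mul_assoc, mul_assoc]
    abel
  have hD' := sub_eq_iff_eq_add.1 hD
  rw [key b c, key c b, hρ, hD']
  abel

theorem EM_symm (ρ : A →ₗ[k] B)
    (hbr : ∀ a b : A, ρ (a * b - b * a) = ρ a * ρ b - ρ b * ρ a) (n : ℕ) :
    ∀ (σ : Equiv.Perm (Fin n)) (a : Fin n → A), EM ρ n (fun i => a (σ i)) = EM ρ n a := by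
  induction n with
  | zero =>
    intro σ a
    congr 1
    exact Subsingleton.elim _ _
  | succ n ih =>
    have hT : ∀ (e : Equiv.Perm (Fin n)) (a : Fin (n + 1) → A),
        EM ρ (n + 1) (fun i => a (Equiv.Perm.decomposeFin.symm (0, e) i)) = EM ρ (n + 1) a := by
      intro e a
      have e1 : (fun i => a (Equiv.Perm.decomposeFin.symm (0, e) i)) =
          (Fin.cons (a 0) (fun i => Fin.tail a (e i)) : Fin (n + 1) → A) := by
        funext i
        refine Fin.cases ?_ (fun i => ?_) i
        · simp
        · simp [Fin.tail]
      rw [e1]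
      conv_rhs => rw [← Fin.cons_self_tail a]
      rw [EM_succ, EM_succ, ih]
      congr 1
      rw [← Equiv.sum_comp e (fun j => EM ρ n (Function.update (Fin.tail a) j (a 0 * Fin.tail a j)))]
      refine Finset.sum_congr rfl fun j _ => ?_
      rw [← ih e (Function.update (Fin.tail a) (e j) (a 0 * Fin.tail a (e j)))]
      congr 1
      funext i
      by_cases h : i = j
      · subst h; simp
      · simp [h]
    have hS : ∀ (p : Fin (n + 1)) (a : Fin (n + 1) → A),
        EM ρ (n + 1) (fun i => a (Equiv.swap 0 p i)) = EM ρ (n + 1) a := by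
      intro p a
      refine Fin.cases ?_ (fun j => ?_) p
      · simp
      · cases n with
        | zero => exact j.elim0
        | succ m =>
          set τ : Equiv.Perm (Fin (m + 2)) :=
            Equiv.Perm.decomposeFin.symm (0, Equiv.swap 0 j) with hτ
          have h0 : τ 0 = 0 := by simp [hτ]
          have h1 : τ 1 = j.succ := by
            rw [hτ, Equiv.Perm.decomposeFin_symm_apply_one]
            simp
          have hinv : ∀ x : Fin (m + 2) → A,
              EM ρ (m + 2) (fun i => x (τ⁻¹ i)) = EM ρ (m + 2) x := by
            intro x
            rw [← hT (Equiv.swap 0 j) (fun i => x (τ⁻¹ i))]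
            congr 1
            funext i
            rw [← hτ]
            simp
          have h01 : ∀ x : Fin (m + 2) → A,
              EM ρ (m + 2) (fun i => x (Equiv.swap 0 1 i)) = EM ρ (m + 2) x := by
            intro x
            have := EM_swap ρ hbr m (x 1) (x 0) (fun i => x i.succ.succ)
            convert this using 2
            · funext i
              refine Fin.cases ?_ (fun i => ?_) i
              · simp
              · refine Fin.cases ?_ (fun i => ?_) i
                · simp
                · rw [Equiv.swap_apply_of_ne_of_ne]
                  · simp
                  · exact Fin.succ_ne_zero _
                  · rw [← Fin.succ_zero_eq_one]
                    exact fun h => Fin.succ_ne_zero _ (Fin.succ_injective _ h)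
            · funext i
              refine Fin.cases ?_ (fun i => ?_) i
              · simp
              · refine Fin.cases ?_ (fun i => ?_) i
                · simp
                · simp
          have hsw : Equiv.swap 0 j.succ = τ * Equiv.swap 0 1 * τ⁻¹ := by
            rw [← Equiv.swap_apply_apply, h0, h1]
          rw [hsw]
          have s1 := hinv (fun i => a (τ (Equiv.swap 0 1 i)))
          have s2 := h01 (fun i => a (τ i))
          have s3 := hT (Equiv.swap 0 j) a
          simp only [Equiv.Perm.mul_apply]
          rw [s1, s2]
          exact s3
    intro σ a
    obtain ⟨⟨p, e⟩, rfl⟩ := Equiv.Perm.decomposeFin.symm.surjective σ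
    rw [← hS p a, ← hT e (fun i => a (Equiv.swap 0 p i))]
    congr 1
    funext i
    refine Fin.cases ?_ (fun i => ?_) i
    · simp
    · simp
end EMsymm

section CyclePart
open Finset

open scoped Classical in
/-- The set of cycles (orbits) of a permutation. -/
noncomputable def cls {n : ℕ} (σ : Equiv.Perm (Fin n)) : Finset (Finset (Fin n)) :=
  univ.image fun x => univ.filter fun y => σ.SameCycle x y

/-- The weight of a permutation. -/
noncomputable def Wt {R : Type*} [CommRing R] (p : ℕ → R) {n : ℕ} (σ : Equiv.Perm (Fin n))
    (d : Fin n → ℕ) : R := ∏ c ∈ cls σ, p (∑ j ∈ c, d j)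

/-- The signed sum of weights. -/
noncomputable def PW {R : Type*} [CommRing R] (p : ℕ → R) (n : ℕ) (d : Fin n → ℕ) : R :=
  ∑ σ : Equiv.Perm (Fin n), (Equiv.Perm.sign σ : ℤ) • Wt p σ d

theorem sameCycle_of_step {α : Type*} [Finite α] (σ : Equiv.Perm α) (r : α → α → Prop)
    (hr : ∀ x, r x x) (ht : ∀ x y z, r x y → r y z → r x z) (hstep : ∀ x, r x (σ x)) {x y : α}
    (h : σ.SameCycle x y) : r x y := by
  have : ∀ i : ℕ, r x ((σ ^ i) x) := by
    intro i
    induction i with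
    | zero => simpa using hr x
    | succ i ih =>
      rw [pow_succ', Equiv.Perm.mul_apply]
      exact ht _ _ _ ih (hstep _)
  obtain ⟨i, hi⟩ := h.exists_nat_pow_eq
  rw [← hi]
  exact this i

theorem Wt_zero {R : Type*} [CommRing R] (p : ℕ → R) {n : ℕ} (e : Equiv.Perm (Fin n))
    (d0 : ℕ) (d : Fin n → ℕ) :
    Wt p (Equiv.Perm.decomposeFin.symm (0, e)) (Fin.cons d0 d : Fin (n + 1) → ℕ) =
      p d0 * Wt p e d := by
  classical
  set σ := Equiv.Perm.decomposeFin.symm ((0 : Fin (n + 1)), e) with hσ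
  have s0 : σ 0 = 0 := by simp [hσ]
  have s1 : ∀ x : Fin n, σ x.succ = (e x).succ := by simp [hσ]
  have c0 : ∀ v, σ.SameCycle 0 v ↔ v = 0 := by
    intro v
    constructor
    · intro h
      have := sameCycle_of_step σ (fun x y => x = 0 → y = 0) (fun _ => id)
        (fun x y z h1 h2 h => h2 (h1 h)) (by rintro x rfl; exact s0) h
      exact this rfl
    · rintro rfl
      exact Equiv.Perm.SameCycle.refl _ _
  have c1 : ∀ x v, σ.SameCycle (Fin.succ x) v ↔ ∃ y, e.SameCycle x y ∧ y.succ = v := by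
    intro x v
    constructor
    · intro h
      have := sameCycle_of_step σ
        (fun u v => ∀ x, Fin.succ x = u → ∃ y, e.SameCycle x y ∧ Fin.succ y = v)
        (fun u x hx => ⟨x, Equiv.Perm.SameCycle.refl _ _, hx⟩)
        (fun u v w h1 h2 x hx => by
          obtain ⟨y, hy, hyv⟩ := h1 x hx
          obtain ⟨z, hz, hzw⟩ := h2 y hyv
          exact ⟨z, hy.trans hz, hzw⟩)
        (by
          rintro u x rfl
          exact ⟨e x, by simp [Equiv.Perm.SameCycle.refl], (s1 x).symm⟩) h
      exact this x rfl
    · rintro ⟨y, hy, rfl⟩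
      exact sameCycle_of_step e (fun x y => σ.SameCycle x.succ y.succ)
        (fun _ => Equiv.Perm.SameCycle.refl _ _) (fun _ _ _ h1 h2 => h1.trans h2)
        (fun x => by rw [← s1]; simp [Equiv.Perm.SameCycle.refl]) hy
  have hc : cls σ = insert {0} ((cls e).image fun c => c.map (Fin.succEmb n)) := by
    ext c
    simp only [cls, Finset.mem_image, Finset.mem_univ, true_and, Finset.mem_insert,
      exists_exists_eq_and]
    rw [Fin.exists_fin_succ]
    refine or_congr ?_ (exists_congr fun x => ?_)
    · have : (univ.filter fun y => σ.SameCycle 0 y) = {0} := by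
        ext v
        simp [c0]
      rw [this, eq_comm]
    · have : (univ.filter fun y => σ.SameCycle x.succ y) =
          (univ.filter fun y => e.SameCycle x y).map (Fin.succEmb n) := by
        ext v
        simp [c1]
      rw [this]
  unfold Wt
  rw [hc, Finset.prod_insert, Finset.prod_image]
  · simp
  · intro c _ c' _ h
    exact Finset.map_injective _ h
  · simp only [Finset.mem_image, not_exists, not_and]
    intro c _ h
    have : (0 : Fin (n + 1)) ∈ c.map (Fin.succEmb n) := by rw [h]; simp [Equiv.Perm.SameCycle.refl]
    simp at this

theorem Wt_succ {R : Type*} [CommRing R] (p : ℕ → R) {n : ℕ} (e : Equiv.Perm (Fin n))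
    (j : Fin n) (d0 : ℕ) (d : Fin n → ℕ) :
    Wt p (Equiv.Perm.decomposeFin.symm (j.succ, e)) (Fin.cons d0 d : Fin (n + 1) → ℕ) =
      Wt p e (Function.update d j (d0 + d j)) := by
  classical
  set σ := Equiv.Perm.decomposeFin.symm (j.succ, e) with hσ
  let π : Fin (n + 1) → Fin n := Fin.cons j id
  have p0 : π 0 = j := rfl
  have p1 : ∀ x, π (Fin.succ x) = x := fun x => rfl
  have s0 : σ 0 = j.succ := by simp [hσ]
  have s1 : ∀ x : Fin n, e x ≠ j → σ x.succ = (e x).succ := by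
    intro x hx
    rw [hσ, Equiv.Perm.decomposeFin_symm_apply_succ, Equiv.swap_apply_of_ne_of_ne]
    · exact Fin.succ_ne_zero _
    · exact fun h => hx (Fin.succ_injective _ h)
  have s2 : ∀ x : Fin n, e x = j → σ x.succ = 0 := by
    intro x hx
    rw [hσ, Equiv.Perm.decomposeFin_symm_apply_succ, hx, Equiv.swap_apply_right]
  have hup : ∀ u, σ.SameCycle u (π u).succ := by
    intro u
    refine Fin.cases ?_ (fun x => ?_) u
    · rw [p0, ← s0]; simp [Equiv.Perm.SameCycle.refl]
    · rw [p1]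
  have hsc : ∀ u v, σ.SameCycle u v ↔ e.SameCycle (π u) (π v) := by
    intro u v
    constructor
    · intro h
      refine sameCycle_of_step σ (fun u v => e.SameCycle (π u) (π v))
        (fun _ => Equiv.Perm.SameCycle.refl _ _) (fun _ _ _ h1 h2 => h1.trans h2) ?_ h
      intro u
      refine Fin.cases ?_ (fun x => ?_) u
      · rw [s0, p0, p1]
      · by_cases hx : e x = j
        · rw [s2 x hx, p0, p1, ← hx]; simp [Equiv.Perm.SameCycle.refl]
        · rw [s1 x hx, p1, p1]; simp [Equiv.Perm.SameCycle.refl]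
    · intro h
      have := sameCycle_of_step e (fun x y => σ.SameCycle x.succ y.succ)
        (fun _ => Equiv.Perm.SameCycle.refl _ _) (fun _ _ _ h1 h2 => h1.trans h2) (fun x => by
          by_cases hx : e x = j
          · have h2 : σ (σ x.succ) = (e x).succ := by rw [s2 x hx, s0, hx]
            rw [← h2]; simp [Equiv.Perm.SameCycle.refl]
          · rw [← s1 x hx]; simp [Equiv.Perm.SameCycle.refl]) h
      exact ((hup u).trans this).trans (hup v).symm
  have hsurj : Function.Surjective π := fun x => ⟨x.succ, rfl⟩
  have hc : cls σ = (cls e).image fun c => univ.filter fun u => π u ∈ c := by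
    ext c
    simp only [cls, Finset.mem_image, Finset.mem_univ, true_and, hsc, exists_exists_eq_and,
      Finset.mem_filter]
    constructor
    · rintro ⟨u, rfl⟩
      exact ⟨π u, rfl⟩
    · rintro ⟨x, rfl⟩
      exact ⟨x.succ, rfl⟩
  unfold Wt
  rw [hc, Finset.prod_image]
  · refine Finset.prod_congr rfl fun c _ => ?_
    congr 1
    rw [Finset.sum_filter, Fin.sum_univ_succ]
    simp only [p0, p1, Fin.cons_zero, Fin.cons_succ]
    have : ∀ x, Function.update d j (d0 + d j) x = (if x = j then d0 else 0) + d x := by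
      intro x
      by_cases h : x = j
      · subst h; simp
      · simp [h]
    simp only [this, Finset.sum_add_distrib, Finset.sum_ite_eq', Finset.sum_ite_mem,
      Finset.univ_inter]
  · intro c _ c' _ h
    ext x
    have := congrArg (fun s => x.succ ∈ s) h
    simpa [p1] using this

theorem PW_nil {R : Type*} [CommRing R] (p : ℕ → R) (d : Fin 0 → ℕ) : PW p 0 d = 1 := by
  simp [PW, Wt, cls]

theorem PW_succ {R : Type*} [CommRing R] (p : ℕ → R) (n : ℕ) (d0 : ℕ) (d : Fin n → ℕ) :
    PW p (n + 1) (Fin.cons d0 d : Fin (n + 1) → ℕ) =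
      p d0 * PW p n d - ∑ j, PW p n (Function.update d j (d0 + d j)) := by
  unfold PW
  rw [← Equiv.sum_comp Equiv.Perm.decomposeFin.symm, Fintype.sum_prod_type, Fin.sum_univ_succ]
  simp only [Wt_zero, Wt_succ, Equiv.Perm.decomposeFin.symm_sign, if_true, Fin.succ_ne_zero,
    if_false, one_mul, neg_mul, Units.val_neg, neg_smul, Finset.sum_neg_distrib]
  rw [Finset.mul_sum, sub_eq_add_neg]
  congr 1
  refine Finset.sum_congr rfl fun σ _ => ?_
  rw [mul_smul_comm]

theorem Wt_one {R : Type*} [CommRing R] (p : ℕ → R) {m : ℕ} (σ : Equiv.Perm (Fin m)) :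
    Wt p σ (fun _ => 1) =
      ((List.range m).map (fun j => p (j + 1) ^ cycleCount σ (j + 1))).prod := by
  classical
  have hc : cls σ = σ.cycleFactorsFinset.image Equiv.Perm.support ∪
      (σ.supportᶜ).image (fun x => {x}) := by
    ext c
    simp only [cls, Finset.mem_image, Finset.mem_univ, true_and, Finset.mem_union,
      Finset.mem_compl]
    have h1 : ∀ x, x ∈ σ.support → (univ.filter fun y => σ.SameCycle x y) =
        (σ.cycleOf x).support := by
      intro x hx
      ext y
      rw [Equiv.Perm.mem_support_cycleOf_iff' (Equiv.Perm.mem_support.1 hx)]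
      simp
    have h2 : ∀ x, x ∉ σ.support → (univ.filter fun y => σ.SameCycle x y) = {x} := by
      intro x hx
      ext y
      rw [Equiv.Perm.notMem_support] at hx
      simp only [Finset.mem_filter, Finset.mem_univ, true_and, Finset.mem_singleton]
      constructor
      · intro h
        exact (h.eq_of_left hx).symm
      · rintro rfl
        exact Equiv.Perm.SameCycle.refl _ _
    constructor
    · rintro ⟨x, rfl⟩
      by_cases hx : x ∈ σ.support
      · exact Or.inl ⟨σ.cycleOf x, Equiv.Perm.cycleOf_mem_cycleFactorsFinset_iff.2 hx, (h1 x hx).symm⟩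
      · exact Or.inr ⟨x, hx, (h2 x hx).symm⟩
    · rintro (⟨g, hg, rfl⟩ | ⟨x, hx, rfl⟩)
      · obtain ⟨x, hx⟩ := (Equiv.Perm.mem_cycleFactorsFinset_iff.1 hg).1.nonempty_support
        refine ⟨x, ?_⟩
        rw [h1 x (Equiv.Perm.mem_cycleFactorsFinset_support_le hg hx),
          ← Equiv.Perm.cycle_is_cycleOf hx hg]
      · exact ⟨x, h2 x hx⟩
  have hdisj : Disjoint (σ.cycleFactorsFinset.image Equiv.Perm.support)
      ((σ.supportᶜ).image (fun x => ({x} : Finset (Fin m)))) := by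
    rw [Finset.disjoint_left]
    intro c h1 h2
    obtain ⟨g, hg, rfl⟩ := Finset.mem_image.1 h1
    obtain ⟨x, hx, h⟩ := Finset.mem_image.1 h2
    have : x ∈ g.support := by rw [← h]; simp
    exact (Finset.mem_compl.1 hx) (Equiv.Perm.mem_cycleFactorsFinset_support_le hg this)
  set M := σ.cycleType + Multiset.replicate (m - σ.cycleType.sum) 1 with hM
  have hW : Wt p σ (fun _ => 1) = (M.map p).prod := by
    unfold Wt
    rw [hc, Finset.prod_union hdisj, Finset.prod_image, Finset.prod_image, hM, Multiset.map_add,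
      Multiset.prod_add, Equiv.Perm.cycleType_def, Multiset.map_map]
    · congr 1
      · refine Finset.prod_congr rfl fun g _ => by simp
      · rw [← Equiv.Perm.cycleType_def, Equiv.Perm.sum_cycleType]
        simp [Finset.card_compl]
    · intro x _ y _ h
      simpa using h
    · intro f hf g hg h
      obtain ⟨x, hx⟩ := (Equiv.Perm.mem_cycleFactorsFinset_iff.1 hf).1.nonempty_support
      have hx' : x ∈ g.support := h ▸ hx
      rw [Equiv.Perm.cycle_is_cycleOf hx hf, Equiv.Perm.cycle_is_cycleOf hx' hg]
  rw [hW, Finset.prod_multiset_map_count, ← List.prod_toFinset, List.toFinset_range]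
  · have hle : σ.cycleType.sum ≤ m := by
      rw [Equiv.Perm.sum_cycleType]
      simpa using Finset.card_le_univ σ.support
    have hsub : M.toFinset ⊆ (Finset.range m).image (fun j => j + 1) := by
      intro x hx
      rw [Multiset.mem_toFinset, hM, Multiset.mem_add] at hx
      have : 1 ≤ x ∧ x ≤ m := by
        rcases hx with hx | hx
        · exact ⟨(Equiv.Perm.two_le_of_mem_cycleType hx).trans' (by norm_num),
            (Multiset.le_sum_of_mem hx).trans hle⟩
        · rw [Multiset.mem_replicate] at hx
          omega
      exact Finset.mem_image.2 ⟨x - 1, Finset.mem_range.2 (by omega), by omega⟩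
    rw [Finset.prod_subset hsub, Finset.prod_image]
    · rfl
    · intro x _ y _ h
      exact Nat.succ_injective h
    · intro x _ hx
      rw [Multiset.mem_toFinset] at hx
      rw [Multiset.count_eq_zero_of_notMem hx, pow_zero]
  · exact List.nodup_range
end CyclePart

section Link
variable {k A B : Type*} [Field k] [Ring A] [Algebra k A] [Ring B] [Algebra k B]

theorem EM_pow (ρ : A →ₗ[k] B) {R : Type*} [CommRing R] (g : R →+* B) (p : ℕ → R) (a : A)
    (hp : ∀ i, g (p i) = ρ (a ^ i)) (n : ℕ) :
    ∀ d : Fin n → ℕ, EM ρ n (fun i => a ^ d i) = g (PW p n d) := by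
  induction n with
  | zero =>
    intro d
    rw [EM_zero, PW_nil, map_one]
  | succ n ih =>
    intro d
    have e1 : (fun i => a ^ d i) =
        (Fin.cons (a ^ d 0) (fun i => a ^ Fin.tail d i) : Fin (n + 1) → A) := by
      funext i
      refine Fin.cases ?_ (fun i => ?_) i
      · simp
      · simp [Fin.tail]
    rw [e1, EM_succ, ih, ← Fin.cons_self_tail d, PW_succ, map_sub, map_mul, hp, map_sum]
    simp only [Fin.cons_zero, Fin.tail_cons]
    congr 1
    refine Finset.sum_congr rfl fun j _ => ?_
    rw [← ih]
    congr 1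
    funext i
    by_cases h : i = j
    · subst h; simp [pow_add]
    · simp [h]

theorem symIdent_eq (ρ : A →ₗ[k] B) {R : Type*} [CommRing R] (g : R →+* B) (p : ℕ → R) (a : A)
    (hp : ∀ i, g (p i) = ρ (a ^ i)) (m : ℕ) :
    symIdentLHS ρ m a = g (PW p m (fun _ => 1)) := by
  unfold symIdentLHS PW
  rw [map_sum]
  refine Finset.sum_congr rfl fun σ _ => ?_
  rw [map_zsmul, Wt_one, map_list_prod, List.map_map]
  congr 3
  funext j
  simp [hp]

theorem EM_diag (ρ : A →ₗ[k] B)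
    (hbr : ∀ a b : A, ρ (a * b - b * a) = ρ a * ρ b - ρ b * ρ a) (m : ℕ) (a : A) :
    EM ρ m (fun _ => a) = symIdentLHS ρ m a := by
  let s : Set B := Set.range fun i : ℕ => ρ (a ^ i)
  have hs : ∀ x ∈ s, ∀ y ∈ s, x * y = y * x := by
    rintro _ ⟨i, rfl⟩ _ ⟨j, rfl⟩
    have h := hbr (a ^ i) (a ^ j)
    rw [← pow_add, ← pow_add, add_comm j i, sub_self, map_zero] at h
    exact (sub_eq_zero.1 h.symm)
  letI : CommRing (Algebra.adjoin k s) := Algebra.adjoinCommRingOfComm k hs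
  let g : Algebra.adjoin k s →+* B := (Algebra.adjoin k s).val.toRingHom
  let p : ℕ → Algebra.adjoin k s := fun i => ⟨ρ (a ^ i), Algebra.subset_adjoin ⟨i, rfl⟩⟩
  have hp : ∀ i, g (p i) = ρ (a ^ i) := fun i => rfl
  have h := EM_pow ρ g p a hp m (fun _ => 1)
  simp only [pow_one] at h
  rw [h, symIdent_eq ρ g p a hp]

theorem EM_one (ρ : A →ₗ[k] B) (ℓ : ℕ) (h1 : ρ 1 = ℓ • (1 : B)) (n : ℕ) (hn : n ≤ ℓ) :
    EM ρ n (fun _ => 1) = (ℓ.descFactorial n : B) := by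
  induction n with
  | zero => simp [EM_zero]
  | succ n ih =>
    have e1 : (fun _ => 1 : Fin (n + 1) → A) = (Fin.cons 1 (fun _ => 1) : Fin (n + 1) → A) := by
      funext i
      refine Fin.cases ?_ (fun i => ?_) i <;> simp
    have e2 : ∀ j : Fin n, Function.update (fun _ => (1 : A)) j (1 * 1) = fun _ => 1 := by
      intro j
      funext i
      by_cases h : i = j
      · subst h; simp
      · simp [h]
    rw [e1, EM_succ, h1]
    simp only [e2]
    rw [ih (by omega), Nat.descFactorial_succ, Nat.cast_mul, Nat.cast_sub (by omega)]
    simp [sub_mul]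
end Link

section TSpart
variable {k A : Type*} [Field k] [Ring A] [Algebra k A] {ℓ : ℕ}

theorem symTen_mem (b : A) : symTen k A ℓ b ∈ tsSubalgebra k A ℓ := by
  intro σ
  unfold symTen
  rw [map_sum]
  refine (Finset.sum_congr rfl fun i _ => ?_).trans
    (Equiv.sum_comp σ fun i => tprod k (Function.update (fun _ : Fin ℓ => (1 : A)) i b))
  rw [PiTensorProduct.reindex_tprod]
  congr 1
  funext j
  by_cases h : j = σ i
  · subst h; simp
  · have : σ.symm j ≠ i := fun h' => h (by rw [← h']; simp)
    simp [h, this]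

theorem symTen_mul_tprod (b : A) (a : Fin ℓ → A) :
    symTen k A ℓ b * tprod k a = ∑ j, tprod k (Function.update a j (b * a j)) := by
  unfold symTen
  rw [Finset.sum_mul]
  refine Finset.sum_congr rfl fun j _ => ?_
  rw [PiTensorProduct.tprod_mul_tprod]
  congr 1
  funext i
  by_cases h : i = j
  · subst h; simp
  · simp [h]

/-- The symmetrizer. -/
noncomputable def symz (k A : Type*) [Field k] [Ring A] [Algebra k A] (ℓ : ℕ) :
    (⨂[k] _ : Fin ℓ, A) →ₗ[k] (⨂[k] _ : Fin ℓ, A) :=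
  ∑ σ : Equiv.Perm (Fin ℓ), (PiTensorProduct.reindex k (fun _ : Fin ℓ => A) σ).toLinearMap

theorem symz_apply (x : ⨂[k] _ : Fin ℓ, A) : symz k A ℓ x =
    ∑ σ : Equiv.Perm (Fin ℓ), PiTensorProduct.reindex k (fun _ : Fin ℓ => A) σ x := by
  simp [symz]

theorem symz_mul (b : A) (x : ⨂[k] _ : Fin ℓ, A) :
    symz k A ℓ (symTen k A ℓ b * x) = symTen k A ℓ b * symz k A ℓ x := by
  simp only [symz_apply, reindex_mul, Finset.mul_sum]
  refine Finset.sum_congr rfl fun σ _ => ?_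
  rw [symTen_mem b σ]

theorem symz_perm (τ : Equiv.Perm (Fin ℓ)) (a : Fin ℓ → A) :
    symz k A ℓ (tprod k (fun i => a (τ i))) = symz k A ℓ (tprod k a) := by
  simp only [symz_apply, PiTensorProduct.reindex_tprod]
  rw [← Equiv.sum_comp (Equiv.mulRight τ)]
  refine Finset.sum_congr rfl fun σ _ => ?_
  congr 1
  funext i
  simp [Equiv.Perm.mul_def]

theorem symz_mem_adjoin [CharZero k] (n : ℕ) : ∀ a : Fin ℓ → A, {i | a i ≠ 1}.ncard ≤ n →
    symz k A ℓ (tprod k a) ∈ Algebra.adjoin k (Set.range (symTen k A ℓ)) := by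
  classical
  induction n with
  | zero =>
    intro a ha
    have : a = fun _ => 1 := by
      funext i
      by_contra h
      have := (Set.ncard_eq_zero (Set.toFinite _)).1 (Nat.le_zero.1 ha)
      exact (Set.eq_empty_iff_forall_notMem.1 this i) h
    have h1 : tprod k a = (1 : ⨂[k] _ : Fin ℓ, A) := by
      rw [this, PiTensorProduct.one_def]; rfl
    rw [h1, symz_apply]
    refine sum_mem fun σ _ => ?_
    rw [reindex_one]
    exact one_mem _
  | succ n ih =>
    intro a ha
    by_cases hall : ∀ i, a i = 1
    · exact ih a (by simp [hall])
    push Not at hall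
    obtain ⟨i, hi⟩ := hall
    set a' := Function.update a i 1 with ha'
    have hcard : {j | a' j ≠ 1}.ncard ≤ n := by
      have : {j | a' j ≠ 1} = {j | a j ≠ 1} \ {i} := by
        ext j
        by_cases h : j = i
        · subst h; simp [ha']
        · simp [ha', h]
      rw [this, Set.ncard_sdiff_singleton_of_mem hi]
      omega
    have hmul : symTen k A ℓ (a i) * symz k A ℓ (tprod k a') ∈
        Algebra.adjoin k (Set.range (symTen k A ℓ)) :=
      mul_mem (Algebra.subset_adjoin ⟨_, rfl⟩) (ih a' hcard)
    rw [← symz_mul, symTen_mul_tprod, map_sum,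
      ← Finset.sum_filter_add_sum_filter_not Finset.univ (fun j => a' j = 1)] at hmul
    have h2 : ∑ j ∈ Finset.univ.filter (fun j => ¬ a' j = 1),
        symz k A ℓ (tprod k (Function.update a' j (a i * a' j))) ∈
        Algebra.adjoin k (Set.range (symTen k A ℓ)) := by
      refine sum_mem fun j hj => ih _ (le_trans (Set.ncard_le_ncard ?_ (Set.toFinite _)) hcard)
      intro l hl
      by_cases h : l = j
      · subst h; exact (Finset.mem_filter.1 hj).2
      · simpa [h] using hl
    have h3 := (Submodule.add_mem_iff_left
      (Subalgebra.toSubmodule (Algebra.adjoin k (Set.range (symTen k A ℓ)))) h2).1 hmul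
    have h4 : ∀ j ∈ Finset.univ.filter (fun j => a' j = 1),
        symz k A ℓ (tprod k (Function.update a' j (a i * a' j))) = symz k A ℓ (tprod k a) := by
      intro j hj
      have hj1 := (Finset.mem_filter.1 hj).2
      rw [← symz_perm (Equiv.swap i j) a]
      congr 2
      funext l
      by_cases h : l = j
      · subst h; simp [hj1]
      · rw [Function.update_of_ne h]
        by_cases h' : l = i
        · subst h'
          have h5 : a j = 1 := by
            rw [ha', Function.update_of_ne (Ne.symm h)] at hj1
            exact hj1
          simp [ha', h5]
        · rw [Equiv.swap_apply_of_ne_of_ne h' h, ha', Function.update_of_ne h']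
    rw [Finset.sum_congr rfl h4, Finset.sum_const, ← Nat.cast_smul_eq_nsmul k] at h3
    refine (Submodule.smul_mem_iff _ ?_).1 h3
    refine Nat.cast_ne_zero.2 (Finset.card_ne_zero_of_mem (a := i) ?_)
    simp [ha']

theorem ts_le_adjoin [CharZero k] {x : ⨂[k] _ : Fin ℓ, A} (hx : x ∈ tsSubalgebra k A ℓ) :
    x ∈ Algebra.adjoin k (Set.range (symTen k A ℓ)) := by
  have h1 : ∀ y : ⨂[k] _ : Fin ℓ, A,
      symz k A ℓ y ∈ Algebra.adjoin k (Set.range (symTen k A ℓ)) := by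
    intro y
    induction y using PiTensorProduct.induction_on with
    | smul_tprod r f =>
      rw [map_smul]
      exact Subalgebra.smul_mem _ (symz_mem_adjoin _ f le_rfl) r
    | add u v hu hv =>
      rw [map_add]
      exact add_mem hu hv
  have h2 := h1 x
  rw [symz_apply, Finset.sum_congr rfl fun σ _ => hx σ, Finset.sum_const,
    ← Nat.cast_smul_eq_nsmul k] at h2
  refine (Submodule.smul_mem_iff
    (Subalgebra.toSubmodule (Algebra.adjoin k (Set.range (symTen k A ℓ)))) ?_).1 h2
  refine Nat.cast_ne_zero.2 ?_
  simp [Fintype.card_perm, Nat.factorial_ne_zero]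
end TSpart

/-- universal property of `TS^ℓ(A)`.  For every unital associative `k`-algebra `B`
and every Lie algebra homomorphism `ρ : A⁻ → B⁻` (a linear map preserving commutators) which
satisfies the `(ℓ+1)`-st symmetric identity and `ρ(1_A) = ℓ·1_B`, there is a unique unital
algebra homomorphism `φ : TS^ℓ(A) → B` with `φ ∘ sym_ℓ = ρ`. -/
theorem ts_universal_property (k A : Type*) [Field k] [CharZero k] [Ring A] [Algebra k A]
    (ℓ : ℕ) (hℓ : 0 < ℓ) (B : Type*) [Ring B] [Algebra k B]
    (ρ : A → B) (hlin : IsLinearMap k ρ)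
    (hbr : ∀ a b : A, ρ (a * b - b * a) = ρ a * ρ b - ρ b * ρ a)
    (hsym : ∀ a : A, symIdentLHS ρ (ℓ + 1) a = 0)
    (h1 : ρ 1 = ℓ • (1 : B)) :
    ∃! φ : tsSubalgebra k A ℓ →ₐ[k] B,
      ∀ (a : A) (h : symTen k A ℓ a ∈ tsSubalgebra k A ℓ),
        φ ⟨symTen k A ℓ a, h⟩ = ρ a := by
  classical
  let r : A →ₗ[k] B := hlin.mk' ρ
  have hr : ∀ a, r a = ρ a := fun _ => rfl
  have hvan : ∀ a, EM r (ℓ + 1) a = 0 := by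
    refine polar_zero _ (EM_symm r hbr (ℓ + 1)) fun a => ?_
    rw [EM_diag r hbr]
    exact hsym a
  let L : (⨂[k] _ : Fin ℓ, A) →ₗ[k] B := ((ℓ.factorial : k)⁻¹) • PiTensorProduct.lift (EM r ℓ)
  have hfac : (ℓ.factorial : k) ≠ 0 := Nat.cast_ne_zero.2 (Nat.factorial_ne_zero ℓ)
  have hL1 : L 1 = 1 := by
    have h := EM_one r ℓ h1 ℓ le_rfl
    rw [Nat.descFactorial_self] at h
    have h' : PiTensorProduct.lift (EM r ℓ) 1 = (ℓ.factorial : B) := by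
      rw [PiTensorProduct.one_def, PiTensorProduct.lift.tprod]
      exact h
    have h3 : (ℓ.factorial : B) = (ℓ.factorial : k) • (1 : B) := by
      rw [Nat.cast_smul_eq_nsmul, nsmul_one]
    rw [LinearMap.smul_apply, h', h3, smul_smul, inv_mul_cancel₀ hfac, one_smul]
  have hLmul : ∀ (b : A) (x : ⨂[k] _ : Fin ℓ, A), L (symTen k A ℓ b * x) = ρ b * L x := by
    intro b x
    induction x using PiTensorProduct.induction_on with
    | smul_tprod s f =>
      have h := hvan (Fin.cons b f)
      rw [EM_succ, sub_eq_zero] at h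
      rw [mul_smul_comm, map_smul, map_smul, mul_smul_comm, symTen_mul_tprod]
      congr 1
      simp only [L, LinearMap.smul_apply, map_sum, PiTensorProduct.lift.tprod]
      rw [← Finset.smul_sum, ← h, mul_smul_comm]
      rfl
    | add u v hu hv => rw [mul_add, map_add, map_add, hu, hv, mul_add]
  have hLsym : ∀ b, L (symTen k A ℓ b) = ρ b := by
    intro b
    have := hLmul b 1
    rwa [mul_one, hL1, mul_one] at this
  have hLL : ∀ y ∈ Algebra.adjoin k (Set.range (symTen k A ℓ)), ∀ x, L (y * x) = L y * L x := by
    intro y hy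
    induction hy using Algebra.adjoin_induction with
    | mem y hy =>
      obtain ⟨b, rfl⟩ := hy
      intro x
      rw [hLmul, hLsym]
    | algebraMap c =>
      intro x
      rw [Algebra.algebraMap_eq_smul_one, smul_mul_assoc, one_mul, map_smul, map_smul, hL1,
        smul_mul_assoc, one_mul]
    | add y z _ _ hy hz =>
      intro x
      rw [add_mul, map_add, map_add, hy, hz, add_mul]
    | mul y z _ _ hy hz =>
      intro x
      rw [mul_assoc, hy, hz, hy, mul_assoc]
  refine ⟨AlgHom.ofLinearMap (L ∘ₗ (tsSubalgebra k A ℓ).val.toLinearMap) ?_ ?_, ?_, ?_⟩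
  · exact hL1
  · intro x y
    exact hLL x (ts_le_adjoin x.2) y
  · intro a h
    exact hLsym a
  · intro φ hφ
    have key : ∀ y ∈ Algebra.adjoin k (Set.range (symTen k A ℓ)),
        ∀ h : y ∈ tsSubalgebra k A ℓ, φ ⟨y, h⟩ = L y := by
      have hle : Algebra.adjoin k (Set.range (symTen k A ℓ)) ≤ tsSubalgebra k A ℓ :=
        Algebra.adjoin_le (by rintro _ ⟨b, rfl⟩; exact symTen_mem b)
      intro y hy
      induction hy using Algebra.adjoin_induction with
      | mem y hy =>
        obtain ⟨b, rfl⟩ := hy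
        intro h
        rw [hφ, hLsym]
      | algebraMap c =>
        intro h
        have hc : L (algebraMap k _ c) = algebraMap k B c := by
          rw [Algebra.algebraMap_eq_smul_one, map_smul, hL1, ← Algebra.algebraMap_eq_smul_one]
        rw [hc]
        exact φ.commutes c
      | add y z hy' hz' hy hz =>
        intro h
        rw [map_add, ← hy (hle hy'), ← hz (hle hz'), ← map_add]
        congr 1
      | mul y z hy' hz' hy hz =>
        intro h
        rw [hLL y hy', ← hy (hle hy'), ← hz (hle hz'), ← map_mul]
        congr 1
    ext x
    exact key x.1 (ts_le_adjoin x.2) x.2
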